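/- In a finite Möbius plane of order q, there exists a point set S of size at most ((q+2)/2)·(1 + log(q^5)) that resolves the set of circles: for any two distinct circles a, b there is a point of S lying on exactly one of them. -/

import Mathlib

open Finset

/-- A Möbius plane on a point type `P`: circles are finite point sets
satisfying the four Möbius plane axioms. -/
structure MobiusPlane (P : Type*) [DecidableEq P] where
  circles : Finset (Finset P)
  ax1 : ∀ A B C : P, A ≠ B → A ≠ C → B ≠ C →
    ∃! z, z ∈ circles ∧ A ∈ z ∧ B ∈ z ∧ C ∈ z
  ax2 : ∀ z ∈ circles, ∀ p ∈ z, ∀ q : P, q ∉ z →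
    ∃! z', z' ∈ circles ∧ p ∈ z' ∧ q ∈ z' ∧ z ∩ z' = {p}
  ax3 : circles.Nonempty ∧ ∀ z ∈ circles, 3 ≤ z.card
  ax4 : ∀ z ∈ circles, ∃ x : P, x ∉ z

/-- A finite Möbius plane has order `q` if every circle has exactly `q + 1` points. -/
def MobiusPlane.HasOrder {P : Type*} [DecidableEq P] (M : MobiusPlane P) (q : ℕ) : Prop :=
  ∀ z ∈ M.circles, z.card = q + 1

noncomputable def greedyF (c m : ℝ) : ℝ := if m ≤ c then m else c * (1 + Real.log (m / c))

lemma greedyF_step (c m m' : ℝ) (hc : 0 < c) (h1 : m' + 1 ≤ m) (h2 : m' ≤ m - m / c)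
    (h0 : 0 ≤ m') : greedyF c m' + 1 ≤ greedyF c m := by
  have hm : 0 < m := by linarith
  unfold greedyF
  by_cases hmc : m ≤ c
  · rw [if_pos hmc, if_pos (by linarith)]; exact h1
  rw [if_neg hmc]
  push Not at hmc
  by_cases hm' : m' ≤ c
  · rw [if_pos hm']
    have hl : 1 - (m / c)⁻¹ ≤ Real.log (m / c) := Real.one_sub_inv_le_log_of_pos (by positivity)
    have e : (m / c)⁻¹ = c / m := by field_simp
    rw [e] at hl
    have h3 : c * (1 - c / m) ≤ c * Real.log (m / c) := by gcongr
    have h4 : 1 ≤ c - c * m' / m := by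
      have : c * m' ≤ c * m - m := by
        calc c * m' ≤ c * (m - m / c) := by gcongr
          _ = c * m - m := by field_simp
      have : c * m' / m ≤ (c * m - m) / m := by gcongr
      have e2 : (c * m - m) / m = c - 1 := by field_simp
      linarith
    have h5 : m' * (1 - c / m) ≤ c * (1 - c / m) := by
      have : c / m ≤ 1 := by rw [div_le_one hm]; exact hmc.le
      apply mul_le_mul_of_nonneg_right hm'; linarith
    have e3 : m' * (1 - c / m) = m' - c * m' / m := by ring
    linarith
  · rw [if_neg hm']
    push Not at hm'
    have hp : 0 < m' := by linarith
    have hl : 1 - (m / m')⁻¹ ≤ Real.log (m / m') := Real.one_sub_inv_le_log_of_pos (by positivity)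
    have e : (m / m')⁻¹ = m' / m := by field_simp
    rw [e] at hl
    have h4 : m' / m ≤ 1 - 1 / c := by
      have : m' / m ≤ (m - m / c) / m := by gcongr
      have e2 : (m - m / c) / m = 1 - 1 / c := by field_simp
      linarith
    have h5 : c * (1 / c) ≤ c * Real.log (m / m') := by gcongr; linarith
    have e3 : c * (1 / c) = 1 := by field_simp
    rw [Real.log_div hm.ne' hp.ne'] at h5
    rw [Real.log_div hm.ne' hc.ne', Real.log_div hp.ne' hc.ne']
    linarith

lemma greedy_cover {P ι : Type*} [DecidableEq P] [Fintype P] [Nonempty P] (g : ι → Finset P)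
    (c : ℝ) (hc : 0 < c) (n : ℕ) : ∀ E : Finset ι, E.card = n →
    (∀ e ∈ E, (Fintype.card P : ℝ) ≤ c * (g e).card) →
    ∃ S : Finset P, (∀ e ∈ E, ∃ p ∈ S, p ∈ g e) ∧ (S.card : ℝ) ≤ greedyF c n := by
  classical
  induction n using Nat.strong_induction_on with
  | _ n ih =>
  intro E hE hg
  rcases Nat.eq_zero_or_pos n with h0 | hpos
  · refine ⟨∅, ?_, ?_⟩
    · have : E = ∅ := by rw [← Finset.card_eq_zero, hE, h0]
      simp [this]
    · subst h0; simp [greedyF, hc.le]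
  have hnR : (0 : ℝ) < n := by exact_mod_cast hpos
  obtain ⟨p, hp⟩ : ∃ p : P, (n : ℝ) / c ≤ (E.filter (fun e => p ∈ g e)).card := by
    by_contra hcon
    push Not at hcon
    have hs : ∑ p : P, (E.filter (fun e => p ∈ g e)).card = ∑ e ∈ E, (g e).card := by
      have := Finset.sum_card_bipartiteAbove_eq_sum_card_bipartiteBelow
        (s := (Finset.univ : Finset P)) (t := E) (fun p e => p ∈ g e)
      simpa [Finset.bipartiteAbove, Finset.bipartiteBelow] using this
    have h1 : ∑ p : P, ((E.filter (fun e => p ∈ g e)).card : ℝ) < ∑ p : P, (n : ℝ) / c :=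
      Finset.sum_lt_sum_of_nonempty Finset.univ_nonempty (fun p _ => hcon p)
    have h2 : ∑ e ∈ E, (Fintype.card P : ℝ) / c ≤ ∑ e ∈ E, ((g e).card : ℝ) := by
      apply Finset.sum_le_sum
      intro e he
      rw [div_le_iff₀ hc, mul_comm]
      exact hg e he
    have hsR : ∑ p : P, ((E.filter (fun e => p ∈ g e)).card : ℝ) = ∑ e ∈ E, ((g e).card : ℝ) := by
      exact_mod_cast hs
    simp only [Finset.sum_const, nsmul_eq_mul, hE, Finset.card_univ] at h1 h2
    rw [hsR] at h1
    have : (n : ℝ) * ((Fintype.card P : ℝ) / c) = (Fintype.card P : ℝ) * ((n : ℝ) / c) := by ring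
    linarith
  have hadd := Finset.card_filter_add_card_filter_not (s := E) (fun e => p ∈ g e)
  have hD : 0 < (E.filter (fun e => p ∈ g e)).card := by
    have : (0 : ℝ) < (E.filter (fun e => p ∈ g e)).card := lt_of_lt_of_le (by positivity) hp
    exact_mod_cast this
  set D := (E.filter (fun e => p ∈ g e)).card with hDd
  set m' := (E.filter (fun e => ¬ p ∈ g e)).card with hm'
  obtain ⟨S, hS, hSc⟩ := ih m' (by omega) (E.filter (fun e => ¬ p ∈ g e)) rfl
    (fun e he => hg e (Finset.mem_filter.1 he).1)
  refine ⟨insert p S, ?_, ?_⟩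
  · intro e he
    by_cases hpe : p ∈ g e
    · exact ⟨p, Finset.mem_insert_self _ _, hpe⟩
    · obtain ⟨x, hx, hxe⟩ := hS e (Finset.mem_filter.2 ⟨he, hpe⟩)
      exact ⟨x, Finset.mem_insert_of_mem hx, hxe⟩
  · have h1 : ((insert p S).card : ℝ) ≤ S.card + 1 := by
      exact_mod_cast Finset.card_insert_le p S
    have hR : (D : ℝ) + m' = n := by rw [← hE]; exact_mod_cast hadd
    have hD1 : (1 : ℝ) ≤ D := by exact_mod_cast hD
    have := greedyF_step c n m' hc (by linarith) (by linarith) (by positivity)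
    linarith

section
variable {P : Type*} [DecidableEq P]

lemma mob_inter (M : MobiusPlane P) {a b : Finset P} (ha : a ∈ M.circles) (hb : b ∈ M.circles)
    (hab : a ≠ b) : (a ∩ b).card ≤ 2 := by
  by_contra hcon
  push Not at hcon
  obtain ⟨x, hx, y, hy, z, hz, hxy, hxz, hyz⟩ := Finset.two_lt_card.1 hcon
  rw [Finset.mem_inter] at hx hy hz
  exact hab ((M.ax1 x y z hxy hxz hyz).unique ⟨ha, hx.1, hy.1, hz.1⟩ ⟨hb, hx.2, hy.2, hz.2⟩)

lemma mob_points [Fintype P] (M : MobiusPlane P) (q : ℕ) (h : M.HasOrder q) (hq : 2 ≤ q) :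
    Fintype.card P ≤ q ^ 2 + 1 := by
  obtain ⟨z, hz⟩ := M.ax3.1
  have hzc := h z hz
  obtain ⟨B, hB⟩ := M.ax4 z hz
  obtain ⟨A, hA⟩ : z.Nonempty := by rw [← Finset.card_pos]; omega
  have hAB : A ≠ B := fun e => hB (e ▸ hA)
  obtain ⟨t, ⟨ht, htA, htB, _⟩, htu⟩ := M.ax2 z hz A hA B hB
  set T := M.circles.filter (fun C => A ∈ C ∧ B ∈ C) with hT
  have hex : ∀ r : P, ∃ C : Finset P, r ∈ z → r ≠ A →
      ∀ C', C' ∈ M.circles → A ∈ C' → B ∈ C' → r ∈ C' → C' = C := by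
    intro r
    by_cases hr : r ∈ z ∧ r ≠ A
    · obtain ⟨C, _, hC⟩ := M.ax1 A B r hAB hr.2.symm (fun e => hB (e ▸ hr.1))
      exact ⟨C, fun _ _ C' h1 h2 h3 h4 => hC C' ⟨h1, h2, h3, h4⟩⟩
    · exact ⟨∅, fun h1 h2 => absurd ⟨h1, h2⟩ hr⟩
  choose f hf using hex
  have hTsub : T ⊆ insert t ((z.erase A).image f) := by
    intro C hC
    rw [hT, Finset.mem_filter] at hC
    by_cases hi : z ∩ C = {A}
    · exact Finset.mem_insert.2 (Or.inl (htu C ⟨hC.1, hC.2.1, hC.2.2, hi⟩))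
    · have : ∃ r ∈ z ∩ C, r ≠ A := by
        by_contra hcon
        push Not at hcon
        exact hi (Finset.eq_singleton_iff_unique_mem.2 ⟨Finset.mem_inter.2 ⟨hA, hC.2.1⟩, hcon⟩)
      obtain ⟨r, hr, hrA⟩ := this
      rw [Finset.mem_inter] at hr
      refine Finset.mem_insert_of_mem (Finset.mem_image.2 ⟨r, Finset.mem_erase.2 ⟨hrA, hr.1⟩, ?_⟩)
      exact (hf r hr.1 hrA C hC.1 hC.2.1 hC.2.2 hr.2).symm
  have hTc : T.card ≤ q + 1 := by
    have h1 := Finset.card_le_card hTsub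
    have h2 := Finset.card_insert_le t ((z.erase A).image f)
    have h3 := Finset.card_image_le (s := z.erase A) (f := f)
    rw [Finset.card_erase_of_mem hA] at h3
    omega
  have hcov : (Finset.univ : Finset P) ⊆ {A, B} ∪ T.biUnion (fun C => C \ {A, B}) := by
    intro X _
    by_cases hX : X ∈ ({A, B} : Finset P)
    · exact Finset.mem_union_left _ hX
    · apply Finset.mem_union_right
      have hX' := hX
      simp only [Finset.mem_insert, Finset.mem_singleton, not_or] at hX'
      obtain ⟨C, ⟨hC, h1, h2, h3⟩, _⟩ := M.ax1 A B X hAB (Ne.symm hX'.1) (Ne.symm hX'.2)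
      exact Finset.mem_biUnion.2 ⟨C, Finset.mem_filter.2 ⟨hC, h1, h2⟩, Finset.mem_sdiff.2 ⟨h3, hX⟩⟩
  have h1 := Finset.card_le_card hcov
  have h2 := Finset.card_union_le ({A, B} : Finset P) (T.biUnion (fun C => C \ {A, B}))
  have h3 : (T.biUnion (fun C => C \ {A, B})).card ≤ T.card * (q - 1) := by
    apply Finset.card_biUnion_le_card_mul
    intro C hC
    rw [hT, Finset.mem_filter] at hC
    have hsub : ({A, B} : Finset P) ⊆ C := by
      intro x hx
      simp only [Finset.mem_insert, Finset.mem_singleton] at hx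
      rcases hx with rfl | rfl
      · exact hC.2.1
      · exact hC.2.2
    rw [Finset.card_sdiff_of_subset hsub, Finset.card_pair hAB, h C hC.1]
    omega
  rw [Finset.card_pair hAB] at h2
  rw [Finset.card_univ] at h1
  have h4 : T.card * (q - 1) ≤ (q + 1) * (q - 1) := Nat.mul_le_mul_right _ hTc
  obtain ⟨r, rfl⟩ : ∃ r, q = r + 1 := ⟨q - 1, by omega⟩
  simp only [Nat.add_sub_cancel] at *
  nlinarith

lemma choose3 (n : ℕ) : (n + 3).choose 3 * 6 = (n + 3) * (n + 2) * (n + 1) := by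
  have := Nat.descFactorial_eq_factorial_mul_choose (n + 3) 3
  simp [Nat.descFactorial, Nat.factorial] at this
  nlinarith

lemma mob_circles [Fintype P] (M : MobiusPlane P) (q : ℕ) (h : M.HasOrder q) (hq : 2 ≤ q) :
    M.circles.card ≤ q ^ 3 + q := by
  have hN := mob_points M q h hq
  have hdis : (M.circles : Set (Finset P)).PairwiseDisjoint (fun C => C.powersetCard 3) := by
    intro a ha b hb hab
    rw [Function.onFun, Finset.disjoint_left]
    intro s hs hs'
    rw [Finset.mem_powersetCard] at hs hs'
    have := mob_inter M ha hb hab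
    have := Finset.card_le_card (Finset.subset_inter hs.1 hs'.1)
    omega
  have h1 : (M.circles.biUnion (fun C => C.powersetCard 3)).card
      ≤ ((Finset.univ : Finset P).powersetCard 3).card := by
    apply Finset.card_le_card
    intro s hs
    obtain ⟨C, _, hC⟩ := Finset.mem_biUnion.1 hs
    exact Finset.mem_powersetCard.2 ⟨Finset.subset_univ _, (Finset.mem_powersetCard.1 hC).2⟩
  rw [Finset.card_biUnion hdis, Finset.card_powersetCard, Finset.card_univ] at h1
  have h2 : ∑ C ∈ M.circles, (C.powersetCard 3).card = M.circles.card * (q + 1).choose 3 := by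
    rw [Finset.sum_const_nat]
    intro C hC
    rw [Finset.card_powersetCard, h C hC]
  rw [h2] at h1
  have h3 := h1.trans (Nat.choose_le_choose 3 hN)
  obtain ⟨r, rfl⟩ : ∃ r, q = r + 2 := ⟨q - 2, by omega⟩
  have e1 := choose3 r
  have e2 := choose3 (r ^ 2 + 4 * r + 2)
  have e3 : (r + 2) ^ 2 + 1 = r ^ 2 + 4 * r + 2 + 3 := by ring
  rw [e3] at h3
  have h4 : M.circles.card * ((r + 3) * (r + 2) * (r + 1)) ≤
      ((r + 2) ^ 3 + (r + 2)) * ((r + 3) * (r + 2) * (r + 1)) := by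
    calc M.circles.card * ((r + 3) * (r + 2) * (r + 1))
        = M.circles.card * (r + 2 + 1).choose 3 * 6 := by rw [← e1]; ring
      _ ≤ (r ^ 2 + 4 * r + 2 + 3).choose 3 * 6 := Nat.mul_le_mul_right _ h3
      _ = _ := by rw [e2]; ring
  exact Nat.le_of_mul_le_mul_right h4 (by positivity)

end

/-- There is a set of at most `((q+2)/2)·(1 + log(q⁵))` points resolving the circle
set of a Möbius plane of order `q`. -/
theorem point_split_resolving_upper_bound {P : Type*} [DecidableEq P] [Fintype P]
    (M : MobiusPlane P) (q : ℕ) (h : M.HasOrder q) :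
    ∃ S : Finset P,
      (∀ a ∈ M.circles, ∀ b ∈ M.circles, a ≠ b →
        ∃ p ∈ S, (p ∈ a ∧ p ∉ b) ∨ (p ∉ a ∧ p ∈ b)) ∧
      (S.card : ℝ) ≤ ((q : ℝ) + 2) / 2 * (1 + Real.log ((q : ℝ) ^ 5)) := by
  obtain ⟨z, hz⟩ := M.ax3.1
  have hzc := h z hz
  have hq : 2 ≤ q := by have := M.ax3.2 z hz; omega
  have hN := mob_points M q h hq
  have hC := mob_circles M q h hq
  rcases Nat.eq_or_lt_of_le hq with h2 | h3
  · subst h2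
    refine ⟨Finset.univ, ?_, ?_⟩
    · intro a _ b _ hab
      by_contra hcon
      apply hab
      ext x
      have := fun hx => hcon ⟨x, Finset.mem_univ x, hx⟩
      tauto
    · rw [Finset.card_univ]
      have : (Fintype.card P : ℝ) ≤ 5 := by exact_mod_cast hN
      have hl := Real.log_two_gt_d9
      rw [Real.log_pow]
      push_cast
      linarith
  have hne : Nonempty P := by
    obtain ⟨x, _⟩ := M.ax4 z hz
    exact ⟨x⟩
  have hq3 : (3 : ℝ) ≤ q := by exact_mod_cast h3
  have hNR : (Fintype.card P : ℝ) ≤ (q : ℝ) ^ 2 + 1 := by exact_mod_cast hN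
  have hCR : (M.circles.card : ℝ) ≤ (q : ℝ) ^ 3 + q := by exact_mod_cast hC
  set c : ℝ := ((q : ℝ) + 2) / 2 with hc
  have hcpos : 0 < c := by positivity
  let g : Finset (Finset P) → Finset P := fun s =>
    Finset.univ.filter (fun p => (∃ a ∈ s, p ∈ a) ∧ ∃ b ∈ s, p ∉ b)
  obtain ⟨S, hS, hSc⟩ := greedy_cover g c hcpos _ (M.circles.powersetCard 2) rfl (by
    intro e he
    rw [Finset.mem_powersetCard] at he
    obtain ⟨a, b, hab, rfl⟩ := Finset.card_eq_two.1 he.2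
    have ha : a ∈ M.circles := he.1 (by simp)
    have hb : b ∈ M.circles := he.1 (by simp)
    have hsub : (a \ b) ∪ (b \ a) ⊆ g {a, b} := by
      intro x hx
      simp only [g, Finset.mem_filter, Finset.mem_univ, true_and, Finset.mem_union,
        Finset.mem_sdiff, Finset.mem_insert, Finset.mem_singleton] at hx ⊢
      rcases hx with hx | hx
      · exact ⟨⟨a, Or.inl rfl, hx.1⟩, ⟨b, Or.inr rfl, hx.2⟩⟩
      · exact ⟨⟨b, Or.inr rfl, hx.1⟩, ⟨a, Or.inl rfl, hx.2⟩⟩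
    have hcard := Finset.card_le_card hsub
    rw [Finset.card_union_of_disjoint disjoint_sdiff_sdiff] at hcard
    have i1 := mob_inter M ha hb hab
    have i2 := mob_inter M hb ha hab.symm
    have j1 := Finset.card_sdiff_add_card_inter a b
    have j2 := Finset.card_sdiff_add_card_inter b a
    rw [h a ha] at j1
    rw [h b hb] at j2
    have hk : 2 * q ≤ (g {a, b}).card + 2 := by omega
    have hkR : 2 * (q : ℝ) ≤ (g {a, b}).card + 2 := by exact_mod_cast hk
    have : c * (2 * q - 2) ≤ c * (g {a, b}).card := by
      apply mul_le_mul_of_nonneg_left _ hcpos.le; linarith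
    have e : c * (2 * q - 2) = (q : ℝ) ^ 2 + q - 2 := by rw [hc]; ring
    linarith)
  refine ⟨S, ?_, hSc.trans ?_⟩
  · intro a ha b hb hab
    obtain ⟨p, hp, hpg⟩ := hS {a, b} (Finset.mem_powersetCard.2 ⟨by
      intro x hx
      simp only [Finset.mem_insert, Finset.mem_singleton] at hx
      rcases hx with rfl | rfl <;> assumption, Finset.card_pair hab⟩)
    refine ⟨p, hp, ?_⟩
    simp [g] at hpg
    tauto
  · rw [Finset.card_powersetCard, Nat.cast_choose_two]
    set m : ℝ := (M.circles.card : ℝ) * (M.circles.card - 1) / 2 with hm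
    have hq5 : (1 : ℝ) ≤ (q : ℝ) ^ 5 := one_le_pow₀ (by linarith)
    have hlog : 0 ≤ Real.log ((q : ℝ) ^ 5) := Real.log_nonneg hq5
    unfold greedyF
    split_ifs with hmc
    · nlinarith
    · push Not at hmc
      have hmp : 0 < m := by linarith
      have hle : m ≤ (q : ℝ) ^ 5 * c := by
        have c1 : (1 : ℝ) ≤ M.circles.card := by
          exact_mod_cast Finset.card_pos.2 ⟨z, hz⟩
        have : (M.circles.card : ℝ) * (M.circles.card - 1) ≤
            ((q : ℝ) ^ 3 + q) * ((q : ℝ) ^ 3 + q - 1) := by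
          apply mul_le_mul hCR (by linarith) (by linarith) (by positivity)
        have p4 : 3 * (q : ℝ) ^ 4 ≤ (q : ℝ) ^ 5 := by
          have : (0 : ℝ) ≤ (q : ℝ) ^ 4 := by positivity
          nlinarith
        have p3 : (q : ℝ) ^ 2 ≤ (q : ℝ) ^ 3 := by
          apply pow_le_pow_right₀ <;> [linarith; norm_num]
        have p0 : (0 : ℝ) ≤ (q : ℝ) ^ 4 := by positivity
        rw [hm, hc]
        nlinarith
      have : Real.log (m / c) ≤ Real.log ((q : ℝ) ^ 5) := by
        apply Real.log_le_log (by positivity)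
        rw [div_le_iff₀ hcpos]
        exact hle
      gcongr
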